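/- Let s_λ be a spectral regularization function family satisfying sup_{t ∈ σ(A*A)} |t s_λ(t)| ≤ D uniformly in λ, sup_λ sup_t |λ s_λ(t)| ≤ E, and qualification q ≥ r (i.e. sup_t |t^ν(1 − t s_λ(t))| ≤ C_ν λ^ν for 0 ≤ ν ≤ q). Let f̂_n^λ = s_λ(A*A) A*_x y with A*_x y = (1/n) Σ_{j=1}^n Y_j φ_{X_j}, under the model E(Y|X=x) = (Af†)(x) and Var(Y|X=x) = σ². Assume the source condition f† = (A*A)^r w with ‖w‖ ≤ R and r ≤ q, and the eigenvalue decay μ_j ≤ d/j^b (b > 1, d > 0) for the eigenvalues μ_j of A*A. Then E(‖f̂_n^λ − f†‖²) ≤ C_r² λ^{2r} R² + (C/n) L λ^{-(1+1/b)} for constants C (depending on σ²) and L (depending on D, E, d, b); consequently, with λ ∈ Θ(n^{-1/(2r+1+1/b)}), E(‖f̂_n^λ − f†‖²) ∈ O(n^{-2r/(2r+1+1/b)}). -/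

import Mathlib

open MeasureTheory ProbabilityTheory Filter Topology Asymptotics RealInnerProductSpace
open scoped ENNReal

/-!
The estimator `s_λ(B) A*_x y` is a mean of `n` i.i.d. vectors `Y s_λ(B) φ_X` with expectation
`s_λ(B) B f†`, so its risk is the squared bias `‖s_λ(B) B f† - f†‖²` plus `1/n` times a variance,
which is at most the second moment. In the eigenbasis, the source condition turns the bias into
`μ_j ^ r (μ_j s_λ(μ_j) - 1)` times the coordinates of `w`, which the qualification bounds by
`C_r λ ^ r`. Since `φ` is bounded, `E(Y² | X)` is bounded by a constant, and the second moment is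
at most that constant times `∑ s_λ(μ_j)² μ_j`. Each term of this series is at most `D E / λ` and
also at most `E² d λ⁻² j ^ (-b)`; using the first bound for `j ≤ λ ^ (-1/b)` and the second one
beyond gives `λ ^ (-(1 + 1/b))`.
-/

section HilbertBasis

variable {ι 𝕜 E : Type*} [RCLike 𝕜] [NormedAddCommGroup E] [InnerProductSpace 𝕜 E]

theorem secondCountableTopology_of_hilbertBasis [Countable ι] (e : HilbertBasis ι 𝕜 E) :
    SecondCountableTopology E := by
  have hsep : TopologicalSpace.IsSeparable (Set.univ : Set E) := by
    have h := ((Set.countable_range e).isSeparable.span (R := 𝕜)).closure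
    rwa [← Submodule.topologicalClosure_coe, e.dense_span, Submodule.top_coe] at h
  have : TopologicalSpace.SeparableSpace E := TopologicalSpace.isSeparable_univ_iff.1 hsep
  exact UniformSpace.secondCountable_of_separable E

theorem hasSum_norm_inner_sq (e : HilbertBasis ι 𝕜 E) (v : E) :
    HasSum (fun j ↦ ‖inner 𝕜 (e j) v‖ ^ 2) (‖v‖ ^ 2) := by
  rw [← RCLike.hasSum_ofReal (𝕜 := 𝕜)]
  simpa only [inner_self_eq_norm_sq_to_K, inner_mul_symm_re_eq_norm, RCLike.ofReal_pow,
    ← RCLike.conj_mul, inner_conj_symm] using e.hasSum_inner_mul_inner v v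

theorem norm_sq_le_of_forall_norm_inner_le (e : HilbertBasis ι 𝕜 E) {v w : E} {K : ℝ}
    (h : ∀ j, ‖inner 𝕜 (e j) v‖ ≤ K * ‖inner 𝕜 (e j) w‖) : ‖v‖ ^ 2 ≤ K ^ 2 * ‖w‖ ^ 2 := by
  refine hasSum_le (fun j ↦ ?_) (hasSum_norm_inner_sq e v)
    ((hasSum_norm_inner_sq e w).mul_left (K ^ 2))
  grw [h j, mul_pow]

theorem inner_apply_of_forall_apply_eq_smul (e : HilbertBasis ι 𝕜 E) {T : E →L[𝕜] E} {t : ι → 𝕜}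
    (hT : ∀ j, T (e j) = t j • e j) (j : ι) (v : E) :
    inner 𝕜 (e j) (T v) = t j * inner 𝕜 (e j) v := by
  classical
  have h : innerSL 𝕜 (e j) ∘L T = t j • innerSL 𝕜 (e j) := by
    refine ContinuousLinearMap.ext_on
      (Submodule.dense_iff_topologicalClosure_eq_top.2 e.dense_span) ?_
    rintro _ ⟨i, rfl⟩
    by_cases hij : j = i <;>
      simp [hT, orthonormal_iff_ite.1 e.orthonormal, hij]
  exact congr($h v)

theorem hasSum_integral_norm_inner_sq [Countable ι] (e : HilbertBasis ι 𝕜 E) {X : Type*}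
    [MeasurableSpace X] {ν : Measure X} {g : X → E} (hg : MemLp g 2 ν) :
    HasSum (fun j ↦ ∫ x, ‖inner 𝕜 (e j) (g x)‖ ^ 2 ∂ν) (∫ x, ‖g x‖ ^ 2 ∂ν) := by
  have hparseval (x : X) := hasSum_norm_inner_sq e (g x)
  refine hasSum_integral_of_dominated_convergence (fun j x ↦ ‖inner 𝕜 (e j) (g x)‖ ^ 2)
    (fun j ↦ (hg.1.const_inner.norm.pow 2)) (fun j ↦ ?_) (.of_forall fun x ↦ (hparseval x).summable)
    ?_ (.of_forall hparseval)
  · exact .of_forall fun x ↦ by simp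
  · simpa only [fun x ↦ (hparseval x).tsum_eq] using hg.integrable_norm_pow two_ne_zero

theorem norm_sub_sq_le_of_source_condition (e : HilbertBasis ι 𝕜 E) {B T : E →L[𝕜] E}
    {a μ t : ι → 𝕜} {f w : E} {K : ℝ} (hB : ∀ j, B (e j) = μ j • e j)
    (hT : ∀ j, T (e j) = t j • e j) (hf : ∀ j, inner 𝕜 (e j) f = a j * inner 𝕜 (e j) w)
    (hK : ∀ j, ‖a j * (1 - μ j * t j)‖ ≤ K) : ‖T (B f) - f‖ ^ 2 ≤ K ^ 2 * ‖w‖ ^ 2 := by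
  refine norm_sq_le_of_forall_norm_inner_le e fun j ↦ ?_
  have hcoord : inner 𝕜 (e j) (T (B f) - f)
      = -(a j * (1 - μ j * t j)) * inner 𝕜 (e j) w := by
    rw [inner_sub_right, inner_apply_of_forall_apply_eq_smul e hT,
      inner_apply_of_forall_apply_eq_smul e hB, hf]
    ring
  rw [hcoord, norm_mul, norm_neg]
  gcongr
  exact hK j

end HilbertBasis

section SampleMean

variable {Ω H : Type*} [MeasurableSpace Ω] {P : Measure Ω}
  [NormedAddCommGroup H] [InnerProductSpace ℝ H]

theorem integrable_inner_of_memLp {f g : Ω → H} (hf : MemLp f 2 P) (hg : MemLp g 2 P) :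
    Integrable (fun ω ↦ ⟪f ω, g ω⟫) P :=
  (hf.norm.integrable_mul hg.norm).mono' (hf.1.inner hg.1)
    (.of_forall fun _ ↦ norm_inner_le_norm _ _)

variable [CompleteSpace H]

theorem integral_norm_sub_sq_eq [IsProbabilityMeasure P] {g : Ω → H} (hg : MemLp g 2 P) (c : H) :
    ∫ ω, ‖g ω - c‖ ^ 2 ∂P = ‖(∫ ω, g ω ∂P) - c‖ ^ 2 + ∫ ω, ‖g ω - ∫ ω', g ω' ∂P‖ ^ 2 ∂P := by
  set m := ∫ ω, g ω ∂P with hm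
  have hgi : Integrable g P := hg.integrable one_le_two
  have hcentred : MemLp (fun ω ↦ g ω - m) 2 P := hg.sub (memLp_const m)
  have hcross : ∫ ω, ⟪m - c, g ω - m⟫ ∂P = 0 := by
    rw [integral_inner (hcentred.integrable one_le_two), integral_sub hgi (integrable_const m)]
    simp [hm]
  have hexpand (ω : Ω) :
      ‖g ω - c‖ ^ 2 = ‖m - c‖ ^ 2 + 2 * ⟪m - c, g ω - m⟫ + ‖g ω - m‖ ^ 2 := by
    rw [← norm_add_sq_real, add_comm, sub_add_sub_cancel]
  have hlin : Integrable (fun ω ↦ 2 * ⟪m - c, g ω - m⟫) P :=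
    ((hcentred.integrable one_le_two).const_inner _).const_mul 2
  simp only [hexpand]
  rw [integral_add (by fun_prop) (hcentred.integrable_norm_pow two_ne_zero),
    integral_add (integrable_const _) hlin, integral_const_mul, hcross]
  simp

theorem integral_norm_sum_sq_of_pairwise_indepFun [IsFiniteMeasure P] [MeasurableSpace H]
    [BorelSpace H] {ι : Type*} {s : Finset ι} {X : ι → Ω → H} (hX : ∀ i ∈ s, MemLp (X i) 2 P)
    (hmean : ∀ i ∈ s, ∫ ω, X i ω ∂P = 0)
    (hindep : (s : Set ι).Pairwise fun i j ↦ IndepFun (X i) (X j) P) :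
    ∫ ω, ‖∑ i ∈ s, X i ω‖ ^ 2 ∂P = ∑ i ∈ s, ∫ ω, ‖X i ω‖ ^ 2 ∂P := by
  have hint {i j : ι} (hi : i ∈ s) (hj : j ∈ s) : Integrable (fun ω ↦ ⟪X i ω, X j ω⟫) P :=
    integrable_inner_of_memLp (hX i hi) (hX j hj)
  have huncorr {i j : ι} (hi : i ∈ s) (hj : j ∈ s) (hij : j ≠ i) :
      ∫ ω, ⟪X i ω, X j ω⟫ ∂P = 0 := by
    refine ((hindep hi hj hij.symm).integral_bilin ((hX i hi).integrable one_le_two)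
      ((hX j hj).integrable one_le_two) (innerSL ℝ)).trans ?_
    simp [hmean i hi]
  simp only [← real_inner_self_eq_norm_sq, sum_inner, inner_sum]
  rw [integral_finsetSum s fun j hj ↦ integrable_finsetSum s fun i hi ↦ hint hi hj]
  refine Finset.sum_congr rfl fun j hj ↦ ?_
  rw [integral_finsetSum s fun i hi ↦ hint hi hj]
  exact Finset.sum_eq_single_of_mem j hj fun i hi hij ↦ huncorr hi hj hij.symm

theorem integral_norm_sub_integral_sq_le [IsProbabilityMeasure P] {g : Ω → H}
    (hg : MemLp g 2 P) : ∫ ω, ‖g ω - ∫ ω', g ω' ∂P‖ ^ 2 ∂P ≤ ∫ ω, ‖g ω‖ ^ 2 ∂P := by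
  have h := integral_norm_sub_sq_eq hg 0
  simp only [sub_zero] at h
  rw [h]
  exact le_add_of_nonneg_left (sq_nonneg _)

variable {ι : Type*} [Fintype ι]

theorem integral_norm_sum_sq_pi [IsProbabilityMeasure P] {h : Ω → H} (hh : MemLp h 2 P)
    (hmean : ∫ ω, h ω ∂P = 0) :
    ∫ z : ι → Ω, ‖∑ i, h (z i)‖ ^ 2 ∂(Measure.pi fun _ ↦ P)
      = Fintype.card ι * ∫ ω, ‖h ω‖ ^ 2 ∂P := by
  borelize H
  rw [integral_norm_sum_sq_of_pairwise_indepFun (X := fun i (z : ι → Ω) ↦ h (z i))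
    (fun i _ ↦ hh.comp_measurePreserving (measurePreserving_eval _ i))
    (fun i _ ↦ (integral_comp_eval (μ := fun _ : ι ↦ P) hh.1).trans hmean)
    fun i _ j _ hij ↦ (iIndepFun_pi (μ := fun _ : ι ↦ P) fun _ ↦ hh.1.aemeasurable).indepFun hij]
  simp [integral_comp_eval (μ := fun _ : ι ↦ P) (f := fun ω ↦ ‖h ω‖ ^ 2) (hh.1.norm.pow 2)]

theorem integral_norm_sampleMean_sub_sq_le [Nonempty ι] [IsProbabilityMeasure P] {g : Ω → H}
    (hg : MemLp g 2 P) (c : H) :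
    ∫ z : ι → Ω, ‖(Fintype.card ι : ℝ)⁻¹ • ∑ i, g (z i) - c‖ ^ 2 ∂(Measure.pi fun _ ↦ P) ≤
      ‖(∫ ω, g ω ∂P) - c‖ ^ 2 + (Fintype.card ι : ℝ)⁻¹ * ∫ ω, ‖g ω‖ ^ 2 ∂P := by
  set n := (Fintype.card ι : ℝ) with hn
  have hn0 : n ≠ 0 := by simp [hn]
  set m := ∫ ω, g ω ∂P with hm
  have hcoord (i : ι) : MemLp (fun z : ι → Ω ↦ g (z i)) 2 (Measure.pi fun _ ↦ P) :=
    hg.comp_measurePreserving (measurePreserving_eval _ i)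
  have hmean : ∫ z : ι → Ω, n⁻¹ • ∑ i, g (z i) ∂(Measure.pi fun _ ↦ P) = m := by
    rw [integral_smul, integral_finsetSum _ fun i _ ↦ (hcoord i).integrable one_le_two]
    simp only [integral_comp_eval (μ := fun _ : ι ↦ P) hg.1, ← hm, Finset.sum_const,
      Finset.card_univ, ← Nat.cast_smul_eq_nsmul ℝ, ← hn, inv_smul_smul₀ hn0]
  have hcentre (z : ι → Ω) : n⁻¹ • ∑ i, g (z i) - m = n⁻¹ • ∑ i, (g (z i) - m) := by
    simp only [Finset.sum_sub_distrib, smul_sub, Finset.sum_const, Finset.card_univ,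
      ← Nat.cast_smul_eq_nsmul ℝ, ← hn, inv_smul_smul₀ hn0]
  have hsum : ∫ z : ι → Ω, ‖∑ i, (g (z i) - m)‖ ^ 2 ∂(Measure.pi fun _ ↦ P)
      = n * ∫ ω, ‖g ω - m‖ ^ 2 ∂P := by
    refine integral_norm_sum_sq_pi (h := fun ω ↦ g ω - m) (hg.sub (memLp_const m)) ?_
    rw [integral_sub (hg.integrable one_le_two) (integrable_const m)]
    simp [hm]
  have hmean_memLp : MemLp (fun z : ι → Ω ↦ n⁻¹ • ∑ i, g (z i)) 2 (Measure.pi fun _ ↦ P) :=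
    (memLp_finsetSum _ fun i _ ↦ hcoord i).const_smul _
  rw [integral_norm_sub_sq_eq hmean_memLp, hmean]
  gcongr
  calc ∫ z : ι → Ω, ‖n⁻¹ • ∑ i, g (z i) - m‖ ^ 2 ∂(Measure.pi fun _ ↦ P)
      = ‖n⁻¹‖ ^ 2 * (n * ∫ ω, ‖g ω - m‖ ^ 2 ∂P) := by
        simp only [hcentre, norm_smul, mul_pow]
        rw [integral_const_mul, hsum]
    _ = n⁻¹ * ∫ ω, ‖g ω - m‖ ^ 2 ∂P := by
        rw [norm_inv, Real.norm_eq_abs, inv_pow, sq_abs]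
        field_simp
    _ ≤ n⁻¹ * ∫ ω, ‖g ω‖ ^ 2 ∂P :=
        mul_le_mul_of_nonneg_left (integral_norm_sub_integral_sq_le hg)
          (inv_nonneg.2 (Nat.cast_nonneg _))

end SampleMean

section Series

theorem sum_range_add_rpow_neg_le {b x : ℝ} (hb : 1 < b) (hx : 0 < x) (k : ℕ) :
    ∑ j ∈ Finset.range k, (x + (j + 1 : ℕ)) ^ (-b) ≤ x ^ (1 - b) / (b - 1) := by
  have hanti : AntitoneOn (fun y : ℝ ↦ y ^ (-b)) (Set.Icc x (x + k)) :=
    (Real.antitoneOn_rpow_Ioi_of_exponent_nonpos (by linarith)).mono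
      fun y hy ↦ hx.trans_le hy.1
  have h0 : (0 : ℝ) ∉ Set.uIcc x (x + k) := Set.notMem_uIcc_of_lt hx (by positivity)
  calc ∑ j ∈ Finset.range k, (x + (j + 1 : ℕ)) ^ (-b)
      ≤ ∫ y in x..x + k, y ^ (-b) := hanti.sum_le_integral
    _ = (x ^ (1 - b) - (x + k) ^ (1 - b)) / (b - 1) := by
        rw [integral_rpow (.inr ⟨by linarith, h0⟩), ← neg_div_neg_eq, neg_sub, neg_add_eq_sub]
        congr 1
        ring
    _ ≤ x ^ (1 - b) / (b - 1) := by
        have : 0 ≤ b - 1 := by linarith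
        gcongr
        exact sub_le_self _ (by positivity)

theorem tsum_add_rpow_neg_le {b x : ℝ} (hb : 1 < b) (hx : 1 ≤ x) :
    ∑' j : ℕ, (x + j) ^ (-b) ≤ b / (b - 1) * x ^ (1 - b) := by
  have hx0 : 0 < x := by linarith
  have hb' : 0 < b - 1 := by linarith
  refine Real.tsum_le_of_sum_range_le (fun j ↦ by positivity) fun k ↦ ?_
  calc ∑ j ∈ Finset.range k, (x + j) ^ (-b)
      ≤ ∑ j ∈ Finset.range (k + 1), (x + j) ^ (-b) :=
        Finset.sum_le_sum_of_subset_of_nonneg (by simp) fun j _ _ ↦ by positivity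
    _ = ∑ j ∈ Finset.range k, (x + (j + 1 : ℕ)) ^ (-b) + x ^ (-b) := by
        rw [Finset.sum_range_succ', Nat.cast_zero, add_zero]
    _ ≤ x ^ (1 - b) / (b - 1) + x ^ (1 - b) := by
        gcongr
        · exact sum_range_add_rpow_neg_le hb hx0 k
        · linarith
    _ = b / (b - 1) * x ^ (1 - b) := by field_simp; ring

theorem tsum_le_of_le_const_of_le_rpow {a : ℕ → ℝ} {b c p t : ℝ} (hb : 1 < b) (ht : 0 < t)
    (ha : ∀ j, 0 ≤ a j) (hp : ∀ j, a j ≤ p) (hc : ∀ j, a j ≤ c * ((j : ℝ) + 1) ^ (-b)) :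
    ∑' j, a j ≤ p * t + c * (b / (b - 1) * t ^ (1 - b)) := by
  have hp0 : 0 ≤ p := (ha 0).trans (hp 0)
  have hc0 : 0 ≤ c := by simpa using (ha 0).trans (hc 0)
  have : 0 < b - 1 := by linarith
  have hsummable : Summable fun j : ℕ ↦ ((j : ℝ) + 1) ^ (-b) := by
    simpa using (summable_nat_add_iff 1).2 (Real.summable_nat_rpow.2 (neg_lt_neg hb))
  have hsa : Summable a := .of_nonneg_of_le ha hc (hsummable.mul_left c)
  set N := ⌊t⌋₊
  have hhead : ∑ j ∈ Finset.range N, a j ≤ p * t :=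
    calc ∑ j ∈ Finset.range N, a j ≤ N * p := by
          simpa using Finset.sum_le_card_nsmul (Finset.range N) a p fun j _ ↦ hp j
      _ ≤ t * p := by gcongr; exact Nat.floor_le ht.le
      _ = p * t := mul_comm _ _
  have htail : ∑' j, a (j + N) ≤ c * (b / (b - 1) * t ^ (1 - b)) :=
    calc ∑' j, a (j + N) ≤ ∑' j : ℕ, c * (((j + N : ℕ) : ℝ) + 1) ^ (-b) :=
          ((summable_nat_add_iff N).2 hsa).tsum_le_tsum (fun j ↦ hc (j + N))
            (((summable_nat_add_iff N).2 hsummable).mul_left c)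
      _ = c * ∑' j : ℕ, ((N + 1 : ℝ) + j) ^ (-b) := by
          rw [tsum_mul_left]
          congr! 4 with j
          push_cast
          ring
      _ ≤ c * (b / (b - 1) * (N + 1 : ℝ) ^ (1 - b)) := by
          gcongr
          exact tsum_add_rpow_neg_le hb (by simp)
      _ ≤ c * (b / (b - 1) * t ^ (1 - b)) := by
          gcongr c * (b / (b - 1) * ?_)
          exact Real.rpow_le_rpow_of_nonpos ht (Nat.lt_floor_add_one t).le (by linarith)
  rw [← hsa.sum_add_tsum_nat_add N]
  exact add_le_add hhead htail

theorem tsum_sq_mul_le_of_decay {μ t : ℕ → ℝ} {b d D E l : ℝ} (hb : 1 < b) (hl : 0 < l)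
    (hμ : ∀ j, 0 ≤ μ j) (hdecay : ∀ j, μ j ≤ d / ((j : ℝ) + 1) ^ b)
    (hD : ∀ j, |μ j * t j| ≤ D) (hE : ∀ j, |l * t j| ≤ E) :
    ∑' j, t j ^ 2 * μ j ≤ (D * E + E ^ 2 * d * (b / (b - 1))) * l ^ (-(1 + 1 / b)) := by
  have hb0 : b ≠ 0 := by linarith
  have hD0 : 0 ≤ D := (abs_nonneg _).trans (hD 0)
  have ht (j : ℕ) : |t j| ≤ E / l := by
    rw [le_div_iff₀' hl, ← abs_of_pos hl, ← abs_mul]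
    exact hE j
  have hconst (j : ℕ) : t j ^ 2 * μ j ≤ D * (E / l) :=
    calc t j ^ 2 * μ j = |μ j * t j| * |t j| := by
          rw [abs_mul, abs_of_nonneg (hμ j), mul_assoc, abs_mul_abs_self, ← sq, mul_comm]
      _ ≤ D * (E / l) := mul_le_mul (hD j) (ht j) (abs_nonneg _) hD0
  have hrpow (j : ℕ) : t j ^ 2 * μ j ≤ (E / l) ^ 2 * d * ((j : ℝ) + 1) ^ (-b) := by
    rw [Real.rpow_neg (by positivity), mul_assoc, ← div_eq_mul_inv, ← sq_abs (t j)]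
    gcongr
    exacts [hμ j, ht j, hdecay j]
  refine (tsum_le_of_le_const_of_le_rpow hb (Real.rpow_pos_of_pos hl (-(1 / b)))
    (fun j ↦ mul_nonneg (sq_nonneg _) (hμ j)) hconst hrpow).trans_eq ?_
  have hsplit : l ^ (-(1 + 1 / b)) = l ^ (-(1 / b)) / l := by
    rw [← Real.rpow_sub_one hl.ne', neg_add_rev, sub_eq_add_neg]
  have hcut : (l ^ (-(1 / b))) ^ (1 - b) = l ^ (-(1 / b)) * l := by
    rw [← Real.rpow_mul hl.le, ← Real.rpow_add_one hl.ne']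
    congr 1
    field_simp
    ring
  rw [hsplit, hcut]
  field_simp

end Series

section Rate

theorem isBigO_rpow_of_le_add_div_mul_rpow {risk lam : ℕ → ℝ} {A C p s : ℝ} (hps : 0 < p + s)
    (hpos : ∀ n, 0 < lam n) (hlam : lam =Θ[atTop] fun n : ℕ ↦ (n : ℝ) ^ (-(1 / (p + s))))
    (hrisk0 : ∀ n, 0 ≤ risk n)
    (hrisk : ∀ n, 0 < n → risk n ≤ A * lam n ^ p + C / n * lam n ^ (-s)) :
    risk =O[atTop] fun n : ℕ ↦ (n : ℝ) ^ (-(p / (p + s))) := by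
  have hrpow (u : ℝ) :
      (fun n ↦ lam n ^ u) =O[atTop] fun n : ℕ ↦ (n : ℝ) ^ (-(1 / (p + s)) * u) := by
    simp only [Real.rpow_mul (Nat.cast_nonneg _)]
    exact (hlam.rpow (.of_forall fun n ↦ (hpos n).le) (.of_forall fun n ↦ by positivity)).isBigO
  have hbias : (fun n ↦ lam n ^ p) =O[atTop] fun n : ℕ ↦ (n : ℝ) ^ (-(p / (p + s))) := by
    simpa only [neg_mul, one_div_mul_eq_div] using hrpow p
  have hvariance : (fun n : ℕ ↦ (n : ℝ)⁻¹ * lam n ^ (-s)) =O[atTop]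
      fun n : ℕ ↦ (n : ℝ) ^ (-(p / (p + s))) := by
    refine ((isBigO_refl _ _).mul (hrpow (-s))).congr' .rfl ?_
    filter_upwards [eventually_gt_atTop 0] with n hn
    rw [← Real.rpow_neg_one, ← Real.rpow_add (by exact_mod_cast hn)]
    congr 1
    field_simp
    ring
  refine IsBigO.trans (.of_bound' ?_) ((hbias.const_mul_left A).add (hvariance.const_mul_left C))
  filter_upwards [eventually_gt_atTop 0] with n hn
  rw [Real.norm_of_nonneg (hrisk0 n), ← mul_assoc, ← div_eq_mul_inv]
  exact (hrisk n hn).trans (Real.le_norm_self _)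

end Rate

section ConditionalMoment

variable {Ω : Type*} [MeasurableSpace Ω] {P : Measure Ω}

theorem memLp_two_of_integral_sub_sq_ne_zero [IsFiniteMeasure P] {Y : Ω → ℝ}
    (hY : AEStronglyMeasurable Y P) {m : ℝ} (hvar : ∫ ω, (Y ω - m) ^ 2 ∂P ≠ 0) : MemLp Y 2 P := by
  have hcentred : MemLp (fun ω ↦ Y ω - m) 2 P :=
    (memLp_two_iff_integrable_sq (hY.sub aestronglyMeasurable_const)).2
      (Integrable.of_integral_ne_zero hvar)
  simpa [Pi.add_def] using hcentred.add (memLp_const m)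

theorem integral_sq_eq_of_integral_eq [IsProbabilityMeasure P] {Y : Ω → ℝ} (hY : MemLp Y 2 P)
    {m : ℝ} (hmean : ∫ ω, Y ω ∂P = m) :
    ∫ ω, Y ω ^ 2 ∂P = m ^ 2 + ∫ ω, (Y ω - m) ^ 2 ∂P := by
  simpa [hmean] using integral_norm_sub_sq_eq hY 0

variable {X E : Type*} [MeasurableSpace X] {ν : Measure X} [SFinite ν] {κ : Kernel X ℝ}
  [IsMarkovKernel κ] [NormedAddCommGroup E] [NormedSpace ℝ E] {g : X → E} {M : ℝ}

theorem aestronglyMeasurable_smul_compProd (hg : AEStronglyMeasurable g ν) :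
    AEStronglyMeasurable (fun p : X × ℝ ↦ p.2 • g p.1) (ν ⊗ₘ κ) := by
  have hfst : MeasurePreserving Prod.fst (ν ⊗ₘ κ) ν :=
    ⟨measurable_fst, Measure.fst_compProd ν κ⟩
  exact measurable_snd.aestronglyMeasurable.smul (hg.comp_measurePreserving hfst)

theorem memLp_smul_compProd (hg : MemLp g 2 ν) (hκ : ∀ᵐ x ∂ν, MemLp id 2 (κ x))
    (hM : ∀ᵐ x ∂ν, ∫ y, y ^ 2 ∂κ x ≤ M) :
    MemLp (fun p : X × ℝ ↦ p.2 • g p.1) 2 (ν ⊗ₘ κ) := by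
  have hmeas := aestronglyMeasurable_smul_compProd (κ := κ) hg.1
  have hmoment : StronglyMeasurable fun x ↦ ∫ y, y ^ 2 ∂κ x :=
    StronglyMeasurable.integral_kernel (by fun_prop)
  rw [memLp_two_iff_integrable_sq_norm hmeas,
    Measure.integrable_compProd_iff (by fun_prop)]
  simp only [norm_smul, mul_pow, norm_mul, norm_pow, Real.norm_eq_abs, sq_abs]
  refine ⟨hκ.mono fun x hx ↦ hx.integrable_sq.mul_const _, ?_⟩
  simp only [integral_mul_const]
  refine ((hg.integrable_norm_pow two_ne_zero).const_mul M).mono'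
    (hmoment.aestronglyMeasurable.mul (hg.1.norm.pow 2)) ?_
  filter_upwards [hM] with x hx
  have : 0 ≤ ∫ y, y ^ 2 ∂κ x := integral_nonneg fun y ↦ sq_nonneg y
  rw [Real.norm_of_nonneg (by positivity)]
  gcongr

theorem integral_norm_smul_sq_compProd_le (hg : MemLp g 2 ν) (hκ : ∀ᵐ x ∂ν, MemLp id 2 (κ x))
    (hM : ∀ᵐ x ∂ν, ∫ y, y ^ 2 ∂κ x ≤ M) :
    ∫ p, ‖p.2 • g p.1‖ ^ 2 ∂(ν ⊗ₘ κ) ≤ M * ∫ x, ‖g x‖ ^ 2 ∂ν := by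
  have hint := (memLp_smul_compProd hg hκ hM).integrable_norm_pow two_ne_zero
  rw [Measure.integral_compProd hint, ← integral_const_mul]
  refine integral_mono_ae hint.integral_compProd
    ((hg.integrable_norm_pow two_ne_zero).const_mul M) ?_
  filter_upwards [hM] with x hx
  simp only [norm_smul, mul_pow, Real.norm_eq_abs, sq_abs, integral_mul_const]
  gcongr

end ConditionalMoment

section Estimator

variable {X H : Type*} [NormedAddCommGroup H] [InnerProductSpace ℝ H]

/-- The empirical adjoint `A*_x y = (1/n) ∑ᵢ Yᵢ φ_{Xᵢ}` evaluated at the labelled sample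
`zᵢ = (Xᵢ, Yᵢ)`. -/
noncomputable def empiricalAdjoint (φ : X → H) {n : ℕ} (z : Fin n → X × ℝ) : H :=
  (n : ℝ)⁻¹ • ∑ i, (z i).2 • φ (z i).1

variable [MeasurableSpace X]

/-- The risk `E ‖T A*_x y - f‖²` of the linear estimator `T A*_x y` of `f` from `n` i.i.d. pairs
`(X, Y)`, where `X` has law `ν` and the conditional law of `Y` given `X = x` is `κ x`. -/
noncomputable def linearEstimatorRisk (ν : Measure X) (κ : Kernel X ℝ) (φ : X → H)
    (T : H →L[ℝ] H) (f : H) (n : ℕ) : ℝ :=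
  ∫ z : Fin n → X × ℝ, ‖T (empiricalAdjoint φ z) - f‖ ^ 2 ∂(Measure.pi fun _ ↦ ν ⊗ₘ κ)

theorem linearEstimatorRisk_nonneg (ν : Measure X) (κ : Kernel X ℝ) (φ : X → H)
    (T : H →L[ℝ] H) (f : H) (n : ℕ) : 0 ≤ linearEstimatorRisk ν κ φ T f n :=
  integral_nonneg fun _ ↦ sq_nonneg _

variable {ν : Measure X} {φ : X → H} {B : H →L[ℝ] H}

theorem hasSum_sq_mul_integral_norm_sq {ι : Type*} [Countable ι] (e : HilbertBasis ι ℝ H)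
    {T : H →L[ℝ] H} {μ t : ι → ℝ} (hφ : MemLp φ 2 ν)
    (hB : ∀ f g : H, ⟪B f, g⟫ = ∫ x, ⟪f, φ x⟫ * ⟪g, φ x⟫ ∂ν)
    (heig : ∀ j, B (e j) = μ j • e j) (hT : ∀ j, T (e j) = t j • e j) :
    HasSum (fun j ↦ t j ^ 2 * μ j) (∫ x, ‖T (φ x)‖ ^ 2 ∂ν) := by
  have hcoord (j : ι) : ∫ x, ‖⟪e j, T (φ x)⟫‖ ^ 2 ∂ν = t j ^ 2 * μ j :=
    calc ∫ x, ‖⟪e j, T (φ x)⟫‖ ^ 2 ∂ν = t j ^ 2 * ∫ x, ⟪e j, φ x⟫ * ⟪e j, φ x⟫ ∂ν := by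
          simp only [inner_apply_of_forall_apply_eq_smul e hT, Real.norm_eq_abs, sq_abs, mul_pow,
            integral_const_mul, ← sq]
      _ = t j ^ 2 * μ j := by
          rw [← hB, heig, real_inner_smul_left, real_inner_self_eq_norm_sq, e.orthonormal.1 j,
            one_pow, mul_one]
  simpa only [Function.comp_apply, hcoord] using hasSum_integral_norm_inner_sq e (T.comp_memLp' hφ)

variable {κ : Kernel X ℝ} [IsMarkovKernel κ] {f : H}

theorem ae_integral_sq_le_of_variance_le {C V : ℝ} (hφ : ∀ᵐ x ∂ν, ‖φ x‖ ≤ C)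
    (hκ : ∀ᵐ x ∂ν, MemLp id 2 (κ x)) (hmean : ∀ᵐ x ∂ν, ∫ y, y ∂κ x = ⟪f, φ x⟫)
    (hvar : ∀ᵐ x ∂ν, ∫ y, (y - ⟪f, φ x⟫) ^ 2 ∂κ x ≤ V) :
    ∀ᵐ x ∂ν, ∫ y, y ^ 2 ∂κ x ≤ (‖f‖ * C) ^ 2 + V := by
  filter_upwards [hφ, hκ, hmean, hvar] with x hφx hκx hmeanx hvarx
  have hinner : |⟪f, φ x⟫| ≤ ‖f‖ * C := (abs_real_inner_le_norm _ _).trans (by gcongr)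
  calc ∫ y, y ^ 2 ∂κ x = |⟪f, φ x⟫| ^ 2 + ∫ y, (y - ⟪f, φ x⟫) ^ 2 ∂κ x := by
        rw [sq_abs]
        exact integral_sq_eq_of_integral_eq hκx hmeanx
    _ ≤ (‖f‖ * C) ^ 2 + V := by gcongr

variable [CompleteSpace H]

theorem integral_smul_compProd_eq_apply [SFinite ν]
    (hint : Integrable (fun p : X × ℝ ↦ p.2 • φ p.1) (ν ⊗ₘ κ))
    (hB : ∀ f g : H, ⟪B f, g⟫ = ∫ x, ⟪f, φ x⟫ * ⟪g, φ x⟫ ∂ν)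
    (hmean : ∀ᵐ x ∂ν, ∫ y, y ∂κ x = ⟪f, φ x⟫) :
    ∫ p, p.2 • φ p.1 ∂(ν ⊗ₘ κ) = B f := by
  refine ext_inner_left ℝ fun v ↦ ?_
  rw [← integral_inner hint, Measure.integral_compProd (hint.const_inner v), real_inner_comm, hB]
  refine integral_congr_ae (hmean.mono fun x hx ↦ ?_)
  simp only [real_inner_smul_right, integral_mul_const, hx]

theorem linearEstimatorRisk_le_bias_add_variance [IsProbabilityMeasure ν] {M : ℝ}
    (hφ : MemLp φ 2 ν) (hB : ∀ f g : H, ⟪B f, g⟫ = ∫ x, ⟪f, φ x⟫ * ⟪g, φ x⟫ ∂ν)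
    (hκ : ∀ᵐ x ∂ν, MemLp id 2 (κ x)) (hmean : ∀ᵐ x ∂ν, ∫ y, y ∂κ x = ⟪f, φ x⟫)
    (hM : ∀ᵐ x ∂ν, ∫ y, y ^ 2 ∂κ x ≤ M) (T : H →L[ℝ] H) {n : ℕ} (hn : 0 < n) :
    linearEstimatorRisk ν κ φ T f n ≤
      ‖T (B f) - f‖ ^ 2 + (n : ℝ)⁻¹ * (M * ∫ x, ‖T (φ x)‖ ^ 2 ∂ν) := by
  have : Nonempty (Fin n) := ⟨⟨0, hn⟩⟩
  have hTφ : MemLp (fun x ↦ T (φ x)) 2 ν := T.comp_memLp' hφ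
  have hint : Integrable (fun p : X × ℝ ↦ p.2 • φ p.1) (ν ⊗ₘ κ) :=
    (memLp_smul_compProd hφ hκ hM).integrable one_le_two
  have hmean_T : ∫ p, p.2 • T (φ p.1) ∂(ν ⊗ₘ κ) = T (B f) := by
    simp only [← map_smul, T.integral_comp_comm hint,
      integral_smul_compProd_eq_apply hint hB hmean]
  have hestimator (z : Fin n → X × ℝ) :
      T (empiricalAdjoint φ z) = (n : ℝ)⁻¹ • ∑ i, (z i).2 • T (φ (z i).1) := by
    simp only [empiricalAdjoint, map_smul, map_sum]
  have hrisk := integral_norm_sampleMean_sub_sq_le (ι := Fin n) (memLp_smul_compProd hTφ hκ hM) f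
  simp only [Fintype.card_fin, hmean_T, ← hestimator] at hrisk
  refine hrisk.trans ?_
  gcongr
  exact integral_norm_smul_sq_compProd_le hTφ hκ hM

theorem linearEstimatorRisk_le_of_source_condition_of_decay [IsProbabilityMeasure ν]
    (e : HilbertBasis ℕ ℝ H) {T : H →L[ℝ] H} {a μ t : ℕ → ℝ} {b d D E K l M R : ℝ} {w : H}
    (hφ : MemLp φ 2 ν) (hB : ∀ f g : H, ⟪B f, g⟫ = ∫ x, ⟪f, φ x⟫ * ⟪g, φ x⟫ ∂ν)
    (heig : ∀ j, B (e j) = μ j • e j) (hT : ∀ j, T (e j) = t j • e j)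
    (hb : 1 < b) (hl : 0 < l) (hμ : ∀ j, 0 ≤ μ j) (hdecay : ∀ j, μ j ≤ d / ((j : ℝ) + 1) ^ b)
    (hD : ∀ j, |μ j * t j| ≤ D) (hE : ∀ j, |l * t j| ≤ E)
    (hf : ∀ j, ⟪e j, f⟫ = a j * ⟪e j, w⟫) (hK : ∀ j, |a j * (1 - μ j * t j)| ≤ K) (hR : ‖w‖ ≤ R)
    (hκ : ∀ᵐ x ∂ν, MemLp id 2 (κ x)) (hmean : ∀ᵐ x ∂ν, ∫ y, y ∂κ x = ⟪f, φ x⟫)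
    (hM : ∀ᵐ x ∂ν, ∫ y, y ^ 2 ∂κ x ≤ M) {n : ℕ} (hn : 0 < n) :
    linearEstimatorRisk ν κ φ T f n ≤ K ^ 2 * R ^ 2 +
      M / n * ((D * E + E ^ 2 * d * (b / (b - 1))) * l ^ (-(1 + 1 / b))) := by
  obtain ⟨x, hx⟩ := hM.exists
  have hM0 : 0 ≤ M := (integral_nonneg fun y ↦ sq_nonneg y).trans hx
  have hbias : ‖T (B f) - f‖ ^ 2 ≤ K ^ 2 * R ^ 2 :=
    (norm_sub_sq_le_of_source_condition e heig hT hf hK).trans (by gcongr)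
  have hvariance : ∫ x, ‖T (φ x)‖ ^ 2 ∂ν ≤
      (D * E + E ^ 2 * d * (b / (b - 1))) * l ^ (-(1 + 1 / b)) :=
    (hasSum_sq_mul_integral_norm_sq e hφ hB heig hT).tsum_eq.symm.trans_le
      (tsum_sq_mul_le_of_decay hb hl hμ hdecay hD hE)
  refine (linearEstimatorRisk_le_bias_add_variance hφ hB hκ hmean hM T hn).trans ?_
  rw [← mul_assoc, inv_mul_eq_div]
  gcongr

end Estimator

/-- **Upper rate for spectral regularization in the statistical learning setting.**
Let `s_λ` be a spectral regularization family (with `|t s_λ(t)| ≤ D`, `|λ s_λ(t)| ≤ E` and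
qualification `q ≥ r`: `|t^ν (1 − t s_λ(t))| ≤ C_ν λ^ν` for `0 ≤ ν ≤ q`, on the spectrum of
`B = A*A`, here expressed on the eigenvalues `μ_j` of `B` in an eigenbasis `(e_j)`), and let
`f̂_n^λ = s_λ(B) A*_x y` with `A*_x y = (1/n) Σ_j Y_j φ_{X_j}`, under the model
`E(Y|X=x) = (A f†)(x) = ⟪f†, φ_x⟫` and `Var(Y|X=x) = σ²`.  Assume the source condition
`f† = B^r w` with `‖w‖ ≤ R`, `r ≤ q`, and the eigenvalue decay `μ_j ≤ d/j^b` (`b > 1`,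
`d > 0`).  Then `E(‖f̂_n^λ − f†‖²) ≤ C_r² λ^{2r} R² + (C/n) L λ^{-(1+1/b)}` for constants
`C` (depending on `σ²`) and `L` (depending on `D`, `E`, `d`, `b`); consequently, with
`λ ∈ Θ(n^{-1/(2r+1+1/b)})`, `E(‖f̂_n^λ − f†‖²) ∈ O(n^{-2r/(2r+1+1/b)})`. -/
theorem stmt18
    {H1 X : Type*}
    [NormedAddCommGroup H1] [InnerProductSpace ℝ H1] [CompleteSpace H1]
    [MeasurableSpace H1] [BorelSpace H1]
    [MeasurableSpace X]
    -- the sampling distribution: marginal `ν` and conditional distribution `κ`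
    (ν : Measure X) [IsProbabilityMeasure ν]
    (κ : Kernel X ℝ) [IsMarkovKernel κ]
    -- the feature map `φ`, with `(A f)(x) = ⟪f, φ x⟫` and `sup_x ‖φ x‖ < ∞`
    (φ : X → H1) (hφmeas : Measurable φ) (hφbdd : ∃ Cφ : ℝ, ∀ x : X, ‖φ x‖ ≤ Cφ)
    -- the operator `B = A*A`, diagonalized by the Hilbert basis `(e_j)` with
    -- eigenvalues `μe_j ≥ 0`
    (B : H1 →L[ℝ] H1) (e : HilbertBasis ℕ ℝ H1) (μe : ℕ → ℝ)
    (hμnonneg : ∀ j : ℕ, 0 ≤ μe j)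
    (heig : ∀ j : ℕ, B (e j) = μe j • e j)
    (hB : ∀ f g : H1, ⟪B f, g⟫ = ∫ x, ⟪f, φ x⟫ * ⟪g, φ x⟫ ∂ν)
    -- eigenvalue decay `μ_j ≤ d / j^b`
    (d b : ℝ) (hd : 0 < d) (hb : 1 < b)
    (hdecay : ∀ j : ℕ, μe j ≤ d / ((j : ℝ) + 1) ^ b)
    -- the spectral regularization function family `s_λ` and its properties
    (s : ℝ → ℝ → ℝ) (D E q : ℝ) (hq : 0 < q)
    (hD : ∀ l : ℝ, 0 < l → ∀ j : ℕ, |μe j * s l (μe j)| ≤ D)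
    (hE : ∀ l : ℝ, 0 < l → ∀ j : ℕ, |l * s l (μe j)| ≤ E)
    (Cq : ℝ → ℝ)
    (hqual : ∀ νe : ℝ, 0 ≤ νe → νe ≤ q → ∀ l : ℝ, 0 < l → ∀ j : ℕ,
      |μe j ^ νe * (1 - μe j * s l (μe j))| ≤ Cq νe * l ^ νe)
    -- the operators `s_λ(B)`, diagonal in the eigenbasis
    (Sop : ℝ → H1 →L[ℝ] H1)
    (hSop : ∀ (l : ℝ) (j : ℕ), Sop l (e j) = s l (μe j) • e j)
    -- the source condition `f† = B^r w`, `‖w‖ ≤ R`, `r ≤ q`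
    (fdag w : H1) (r R : ℝ) (hr : 0 < r) (hrq : r ≤ q) (hR : ‖w‖ ≤ R)
    (hsource : ∀ j : ℕ, ⟪fdag, e j⟫ = μe j ^ r * ⟪w, e j⟫)
    -- the statistical model: conditional mean `⟪f†, φ x⟫` and conditional variance `σ²`
    (σ : ℝ) (hσ : 0 < σ)
    (hmean : ∀ᵐ x ∂ν, (∫ z, z ∂(κ x)) = ⟪fdag, φ x⟫)
    (hvar : ∀ᵐ x ∂ν, (∫ z, (z - ⟪fdag, φ x⟫) ^ 2 ∂(κ x)) = σ ^ 2) :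
    -- the bias–variance upper bound, for constants `C` and `L`
    (∃ C : ℝ, 0 ≤ C ∧ ∃ L : ℝ, 0 ≤ L ∧
      ∀ n : ℕ, 0 < n → ∀ l : ℝ, 0 < l →
        (∫ z : Fin n → X × ℝ,
            ‖Sop l ((n : ℝ)⁻¹ • ∑ i, (z i).2 • φ (z i).1) - fdag‖ ^ 2
            ∂(Measure.pi fun _ : Fin n => ν ⊗ₘ κ)) ≤
          (Cq r) ^ 2 * l ^ (2 * r) * R ^ 2 + C / n * L * l ^ (-(1 + 1 / b))) ∧
    -- consequently, the upper rate `O(n^{-2r/(2r+1+1/b)})` with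
    -- `λ_n ∈ Θ(n^{-1/(2r+1+1/b)})`
    (∀ lamn : ℕ → ℝ, (∀ n : ℕ, 0 < lamn n) →
      (lamn =Θ[atTop] fun n : ℕ => (n : ℝ) ^ (-(1 / (2 * r + 1 + 1 / b)))) →
      (fun n : ℕ =>
          ∫ z : Fin n → X × ℝ,
            ‖Sop (lamn n) ((n : ℝ)⁻¹ • ∑ i, (z i).2 • φ (z i).1) - fdag‖ ^ 2
            ∂(Measure.pi fun _ : Fin n => ν ⊗ₘ κ))
        =O[atTop] fun n : ℕ => (n : ℝ) ^ (-(2 * r / (2 * r + 1 + 1 / b)))) := by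
  obtain ⟨Cφ, hCφ⟩ := hφbdd
  have : SecondCountableTopology H1 := secondCountableTopology_of_hilbertBasis e
  have hφ : MemLp φ 2 ν := .of_bound hφmeas.aestronglyMeasurable Cφ (.of_forall hCφ)
  -- A nonzero integral is not the junk value `0`, so `Y` is conditionally square integrable.
  have hκ : ∀ᵐ x ∂ν, MemLp id 2 (κ x) := hvar.mono fun x hx ↦
    memLp_two_of_integral_sub_sq_ne_zero aestronglyMeasurable_id (hx.trans_ne (by positivity))
  have hM := ae_integral_sq_le_of_variance_le (.of_forall hCφ) hκ hmean (hvar.mono fun _ ↦ le_of_eq)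
  set M := (‖fdag‖ * Cφ) ^ 2 + σ ^ 2
  set L := D * E + E ^ 2 * d * (b / (b - 1))
  have hD0 : 0 ≤ D := (abs_nonneg _).trans (hD 1 one_pos 0)
  have hE0 : 0 ≤ E := (abs_nonneg _).trans (hE 1 one_pos 0)
  have : 0 < b - 1 := sub_pos.2 hb
  have hrisk (n : ℕ) (hn : 0 < n) (l : ℝ) (hl : 0 < l) :
      linearEstimatorRisk ν κ φ (Sop l) fdag n ≤
        Cq r ^ 2 * l ^ (2 * r) * R ^ 2 + M / n * L * l ^ (-(1 + 1 / b)) := by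
    refine (linearEstimatorRisk_le_of_source_condition_of_decay e hφ hB heig (hSop l) hb hl hμnonneg
      hdecay (hD l hl) (hE l hl) (fun j ↦ by simpa only [real_inner_comm] using hsource j)
      (hqual r hr.le hrq l hl) hR hκ hmean hM hn).trans_eq ?_
    rw [mul_pow, ← Real.rpow_mul_natCast hl.le, mul_comm r, ← mul_assoc, Nat.cast_ofNat]
  refine ⟨⟨M, by positivity, L, by positivity, hrisk⟩, fun lamn hpos hlam ↦ ?_⟩
  simp only [add_assoc] at hlam ⊢
  exact isBigO_rpow_of_le_add_div_mul_rpow (A := Cq r ^ 2 * R ^ 2) (C := M * L) (by positivity)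
    hpos hlam (fun n ↦ linearEstimatorRisk_nonneg ν κ φ (Sop (lamn n)) fdag n)
    fun n hn ↦ (hrisk n hn (lamn n) (hpos n)).trans_eq (by ring)
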